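/- Let (A,φ) be a connection and Higgs field on ℝ³ solving the space-time monopole equation, let θ ∈ ℝ, and set ρ = e^{iθ}. Suppose k : ℝ³ → U(n) is a smooth unitary-valued map solving the μ-linear system for (A,φ) with μ = ρ, and E : ℝ³ → GL(n,ℂ) is a smooth map solving the μ-linear system for (A,φ) with μ = −ρ. Then g := k⁻¹E solves the Ward equation with parameter e^{iθ}: −∂_t((∂_tg)g⁻¹) + ∂_x((∂_xg)g⁻¹) + ∂_y((∂_yg)g⁻¹) + [(∂_tg)g⁻¹, cosθ·(∂_xg)g⁻¹ + sinθ·(∂_yg)g⁻¹] = 0. -/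

import Mathlib

open Matrix Complex
open scoped Matrix ComplexConjugate

attribute [local instance] Matrix.normedAddCommGroup Matrix.normedSpace

noncomputable section

/-- `n × n` complex matrices. -/
abbrev Mat (n : ℕ) := Matrix (Fin n) (Fin n) ℂ

/-- Space-time `ℝ³` with coordinates `(x, y, t)`. -/
abbrev P3 : Type := ℝ × ℝ × ℝ

section PartialDerivatives

variable {W : Type*} [NormedAddCommGroup W] [NormedSpace ℝ W]

/-- Partial derivative in `x`. -/
def pdx (f : P3 → W) (p : P3) : W := deriv (fun s => f (s, p.2.1, p.2.2)) p.1

/-- Partial derivative in `y`. -/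
def pdy (f : P3 → W) (p : P3) : W := deriv (fun s => f (p.1, s, p.2.2)) p.2.1

/-- Partial derivative in `t`. -/
def pdt (f : P3 → W) (p : P3) : W := deriv (fun s => f (p.1, p.2.1, s)) p.2.2

/-- Light-cone derivative `∂_ξ = ∂_t + ∂_x`. -/
def pdxi (f : P3 → W) (p : P3) : W := pdt f p + pdx f p

/-- Light-cone derivative `∂_η = ∂_t − ∂_x`. -/
def pdeta (f : P3 → W) (p : P3) : W := pdt f p - pdx f p

end PartialDerivatives

/-- `∂_z = ½(∂_x − i ∂_y)`. -/
def pdz {n : ℕ} (f : P3 → Mat n) (p : P3) : Mat n :=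
  (2⁻¹ : ℂ) • (pdx f p - Complex.I • pdy f p)

/-- `∂_z̄ = ½(∂_x + i ∂_y)`. -/
def pdzbar {n : ℕ} (f : P3 → Mat n) (p : P3) : Mat n :=
  (2⁻¹ : ℂ) • (pdx f p + Complex.I • pdy f p)

/-- Commutator `[X, Y] = XY − YX`. -/
def brk {n : ℕ} (X Y : Mat n) : Mat n := X * Y - Y * X

/-- Anti-Hermitian-valued map. -/
def SkewHerm {n : ℕ} (f : P3 → Mat n) : Prop := ∀ p : P3, (f p)ᴴ = -(f p)

/-- The space-time monopole equation `F_{xy} = −∇_tφ`, `F_{xt} = −∇_yφ`, `F_{yt} = ∇_xφ`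
for the connection `(Ax, Ay, At)` and Higgs field `Ph`, at the point `p`. -/
def MonopoleEqAt {n : ℕ} (Ax Ay At Ph : P3 → Mat n) (p : P3) : Prop :=
  (-(pdx Ay p) + pdy Ax p + brk (Ax p) (Ay p) = -(pdt Ph p - brk (At p) (Ph p))) ∧
  (-(pdx At p) + pdt Ax p + brk (Ax p) (At p) = -(pdy Ph p - brk (Ay p) (Ph p))) ∧
  (-(pdy At p) + pdt Ay p + brk (Ay p) (At p) = pdx Ph p - brk (Ax p) (Ph p))

/-- The space-time monopole equation on all of `ℝ³`. -/
def MonopoleEq {n : ℕ} (Ax Ay At Ph : P3 → Mat n) : Prop :=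
  ∀ p : P3, MonopoleEqAt Ax Ay At Ph p

/-- `E` solves the `μ`-linear system for `(A, φ)`. -/
def SolvesMu {n : ℕ} (Ax Ay At Ph : P3 → Mat n) (μ : ℂ) (E : P3 → Mat n) : Prop :=
  ∀ p : P3,
    (2⁻¹ : ℂ) • pdt E p + μ • pdz E p =
      ((2⁻¹ : ℂ) • (At p + Complex.I • Ph p) +
        μ • ((2⁻¹ : ℂ) • (Ax p - Complex.I • Ay p))) * E p ∧
    (2⁻¹ : ℂ) • pdt E p + μ⁻¹ • pdzbar E p =
      ((2⁻¹ : ℂ) • (At p - Complex.I • Ph p) +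
        μ⁻¹ • ((2⁻¹ : ℂ) • (Ax p + Complex.I • Ay p))) * E p

/-- `F` solves the `λ`-linear system for `(A, φ)`. -/
def SolvesLam {n : ℕ} (Ax Ay At Ph : P3 → Mat n) (lm : ℂ) (F : P3 → Mat n) : Prop :=
  ∀ p : P3,
    lm • pdxi F p - pdy F p = (lm • (At p + Ax p) - (Ay p + Ph p)) * F p ∧
    lm⁻¹ • pdeta F p - pdy F p = (lm⁻¹ • (At p - Ax p) - (Ay p - Ph p)) * F p

/-- The left-hand side of the Ward equation with parameter `e^{iθ}`, evaluated at `p`: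
`−∂_t((∂_tg)g⁻¹) + ∂_x((∂_xg)g⁻¹) + ∂_y((∂_yg)g⁻¹)
  + [(∂_tg)g⁻¹, cosθ·(∂_xg)g⁻¹ + sinθ·(∂_yg)g⁻¹]`. -/
def WardOpAt {n : ℕ} (θ : ℝ) (g : P3 → Mat n) (p : P3) : Mat n :=
  -(pdt (fun q => pdt g q * (g q)⁻¹) p) + pdx (fun q => pdx g q * (g q)⁻¹) p +
    pdy (fun q => pdy g q * (g q)⁻¹) p +
    brk (pdt g p * (g p)⁻¹)
      ((Real.cos θ : ℂ) • (pdx g p * (g p)⁻¹) + (Real.sin θ : ℂ) • (pdy g p * (g p)⁻¹))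

/-!
Let `T = ∂_t`, `U = cos θ ∂_x + sin θ ∂_y` and `V = sin θ ∂_x − cos θ ∂_y`. Adding and subtracting
the two equations of the linear systems at `± e^{iθ}` turns them into
`(∇_T + ∇_U) k = 0`, `∇_V k = φ k` and `(∇_T − ∇_U) E = 0`, `∇_V E = −φ E`.
In the gauge given by `k` the first pair says `A_U = −A_T` and `A_V = −φ`, so that the second pair
for `g = k⁻¹ E` becomes `J_T − J_U = 2 A_T` and `J_V = −2 φ`, where `J = (∂g) g⁻¹`.
The gauge-covariant component `F_{UT} = ∇_V φ` of the monopole equation now reads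
`(∂_T + ∂_U)(J_T − J_U) = ∂_V J_V`. Since `J` is flat, this is the Ward equation in the frame
`(T, U, V)`, and `∂_U J_U + ∂_V J_V = ∂_x J_x + ∂_y J_y` because the frame is orthonormal.
-/

section FrameRotation

variable {R M N : Type*} [CommRing R] [AddCommGroup M] [Module R M] [AddCommGroup N] [Module R N]

lemma apply_self_add_apply_self_rotate (B : M →ₗ[R] M →ₗ[R] N) {c s : R} (hcs : c ^ 2 + s ^ 2 = 1)
    (x y : M) :
    B (c • x + s • y) (c • x + s • y) + B (s • x - c • y) (s • x - c • y) = B x x + B y y := by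
  calc B (c • x + s • y) (c • x + s • y) + B (s • x - c • y) (s • x - c • y)
      = (c ^ 2 + s ^ 2) • (B x x + B y y) := by
        simp only [map_add, map_sub, map_smul, LinearMap.add_apply, LinearMap.sub_apply,
          LinearMap.smul_apply]
        module
    _ = B x x + B y y := by rw [hcs, one_smul]

end FrameRotation

/-- A family of commuting `R`-linear derivations of a possibly noncommutative algebra `S`,
depending linearly on a direction in `M`: the algebraic counterpart of the directional derivatives
of matrix-valued maps. Mathlib's `Derivation` is restricted to commutative algebras. -/
structure CommutingDerivations (R M S : Type*) [CommRing R] [AddCommGroup M] [Module R M]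
    [Ring S] [Algebra R S] where
  der : M →ₗ[R] S →ₗ[R] S
  der_mul : ∀ v a b, der v (a * b) = der v a * b + a * der v b
  der_comm : ∀ v w a, der v (der w a) = der w (der v a)

namespace CommutingDerivations

variable {R M S : Type*} [CommRing R] [AddCommGroup M] [Module R M] [Ring S] [Algebra R S]
variable (D : CommutingDerivations R M S)

lemma der_one (v : M) : D.der v 1 = 0 := by
  simpa using D.der_mul v 1 1

lemma der_inv (v : M) (u : Sˣ) : D.der v ↑u⁻¹ = -(↑u⁻¹ * D.der v u * ↑u⁻¹) := by
  have product_rule : 0 = D.der v ↑u⁻¹ * u + ↑u⁻¹ * D.der v u := by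
    rw [← D.der_mul, Units.inv_mul, D.der_one]
  rw [← neg_mul, Units.eq_mul_inv_iff_mul_eq]
  exact eq_neg_of_add_eq_zero_left product_rule.symm

/-- The covariant derivative `∂_v E − A_v E` of a section `E` of the trivial bundle on which `S`
acts by left multiplication, for the connection `A`. -/
def covDeriv (A : M →ₗ[R] S) (E : S) : M →ₗ[R] S :=
  D.der.flip E - (LinearMap.mulRight R E).comp A

/-- The covariant derivative `∇_v φ = ∂_v φ − [A_v, φ]` of a Higgs field, that is, of a section
of the adjoint bundle. -/
def adCovDeriv (A : M →ₗ[R] S) (v : M) (φ : S) : S := D.der v φ - ⁅A v, φ⁆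

/-- The curvature `F_{vw} = −∂_v A_w + ∂_w A_v + [A_v, A_w]` of the connection `A`. -/
def curvature (A : M →ₗ[R] S) (v w : M) : S := -D.der v (A w) + D.der w (A v) + ⁅A v, A w⁆

/-- The connection `k⁻¹ A k − k⁻¹ ∂k` into which the change of frame `k` transforms `A`; frames
`E` become `k⁻¹ E` and Higgs fields `φ` become `k⁻¹ φ k`. -/
def gaugeTransform (k : Sˣ) (A : M →ₗ[R] S) : M →ₗ[R] S :=
  -(LinearMap.mulLeft R (↑k⁻¹ : S)).comp (D.covDeriv A k)

/-- The right logarithmic derivative `v ↦ (∂_v g) g⁻¹`. -/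
def logDeriv (g : Sˣ) : M →ₗ[R] S := (LinearMap.mulRight R (↑g⁻¹ : S)).comp (D.der.flip g)

lemma covDeriv_apply (A : M →ₗ[R] S) (E : S) (v : M) :
    D.covDeriv A E v = D.der v E - A v * E := rfl

lemma gaugeTransform_apply (k : Sˣ) (A : M →ₗ[R] S) (v : M) :
    D.gaugeTransform k A v = -(↑k⁻¹ * D.covDeriv A k v) := rfl

lemma logDeriv_apply (g : Sˣ) (v : M) : D.logDeriv g v = D.der v g * ↑g⁻¹ := rfl

section GaugeCovariance

variable (k : Sˣ) (A : M →ₗ[R] S) (v w : M)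

lemma covDeriv_gaugeTransform (E : S) :
    D.covDeriv (D.gaugeTransform k A) (↑k⁻¹ * E) v = ↑k⁻¹ * D.covDeriv A E v := by
  simp only [covDeriv_apply, gaugeTransform_apply, der_mul, der_inv, mul_sub, sub_mul, neg_mul,
    mul_assoc, Units.mul_inv_cancel_left]
  abel

lemma adCovDeriv_gaugeTransform (φ : S) :
    D.adCovDeriv (D.gaugeTransform k A) v (↑k⁻¹ * φ * k) = ↑k⁻¹ * D.adCovDeriv A v φ * k := by
  simp only [adCovDeriv, covDeriv_apply, gaugeTransform_apply, Ring.lie_def, der_mul, der_inv,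
    mul_add, mul_sub, sub_mul, mul_neg, neg_mul, mul_assoc, Units.mul_inv_cancel_left]
  abel

lemma curvature_gaugeTransform :
    D.curvature (D.gaugeTransform k A) v w = ↑k⁻¹ * D.curvature A v w * k := by
  simp only [curvature, covDeriv_apply, gaugeTransform_apply, Ring.lie_def, der_mul, der_inv,
    D.der_comm w v, map_sub, map_neg, mul_add, mul_sub, sub_mul, mul_neg, add_mul, neg_mul,
    mul_assoc, Units.mul_inv_cancel_left]
  abel

end GaugeCovariance

lemma curvature_logDeriv (g : Sˣ) (v w : M) : D.curvature (D.logDeriv g) v w = 0 := by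
  simp only [curvature, logDeriv_apply, Ring.lie_def, der_mul, der_inv, D.der_comm w v, mul_neg,
    mul_assoc]
  abel

lemma logDeriv_eq_of_der_eq_mul {g : Sˣ} {v : M} {a : S} (h : D.der v g = a * g) :
    D.logDeriv g v = a := by
  rw [logDeriv_apply, h, Units.mul_inv_cancel_right]

/-- The left-hand side `−∂_T J_T + ∂_U J_U + ∂_V J_V + [J_T, J_U]` of the Ward equation in the
frame `(T, U, V)`, where `J` is the logarithmic derivative of `g`. -/
def wardOp (g : Sˣ) (T U V : M) : S :=
  -D.der T (D.logDeriv g T) + D.der U (D.logDeriv g U) + D.der V (D.logDeriv g V) +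
    ⁅D.logDeriv g T, D.logDeriv g U⁆

lemma wardOp_eq_der_sub_der (g : Sˣ) (T U V : M) :
    D.wardOp g T U V =
      D.der V (D.logDeriv g V) - D.der (T + U) (D.logDeriv g (T - U)) := by
  have flat := D.curvature_logDeriv g T U
  simp only [curvature] at flat
  simp only [wardOp, map_add, map_sub, LinearMap.add_apply]
  linear_combination (norm := abel) flat

lemma wardOp_eq_zero_of_gauge_fixed {a : M →ₗ[R] S} {φ : S} {g : Sˣ} {T U V : M}
    (monopole : D.curvature a U T = D.adCovDeriv a V φ)
    (gauge_TU : a (T + U) = 0) (gauge_V : a V = -φ)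
    (hg_TU : D.covDeriv a g (T - U) = 0) (hg_V : D.covDeriv a g V = -(φ * g)) :
    D.wardOp g T U V = 0 := by
  have hU : a U = -a T := by
    rw [map_add] at gauge_TU
    exact (neg_eq_of_add_eq_zero_right gauge_TU).symm
  have hJ_TU : D.logDeriv g (T - U) = a T + a T := by
    rw [D.logDeriv_eq_of_der_eq_mul (sub_eq_zero.mp hg_TU), map_sub, hU, sub_neg_eq_add]
  have hJ_V : D.logDeriv g V = -(φ + φ) := by
    refine D.logDeriv_eq_of_der_eq_mul ?_
    rw [covDeriv_apply, gauge_V] at hg_V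
    linear_combination (norm := noncomm_ring) hg_V
  have conservation : D.der (T + U) (a T) = -D.der V φ := by
    simp only [curvature, adCovDeriv, hU, gauge_V, Ring.lie_def, map_neg] at monopole
    rw [map_add, LinearMap.add_apply]
    linear_combination (norm := noncomm_ring) -monopole
  rw [wardOp_eq_der_sub_der, hJ_TU, hJ_V, map_neg, map_add, map_add, conservation]
  abel

theorem wardOp_inv_mul_eq_zero {A : M →ₗ[R] S} {φ : S} {k E : Sˣ} {T U V : M}
    (monopole : D.curvature A U T = D.adCovDeriv A V φ)
    (hk_TU : D.covDeriv A k (T + U) = 0) (hk_V : D.covDeriv A k V = φ * k)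
    (hE_TU : D.covDeriv A E (T - U) = 0) (hE_V : D.covDeriv A E V = -(φ * E)) :
    D.wardOp (k⁻¹ * E) T U V = 0 := by
  refine D.wardOp_eq_zero_of_gauge_fixed (a := D.gaugeTransform k A) (φ := ↑k⁻¹ * φ * k)
    ?_ ?_ ?_ ?_ ?_
  · rw [curvature_gaugeTransform, adCovDeriv_gaugeTransform, monopole]
  · rw [gaugeTransform_apply, hk_TU, mul_zero, neg_zero]
  · rw [gaugeTransform_apply, hk_V, mul_assoc]
  · rw [Units.val_mul, covDeriv_gaugeTransform, hE_TU, mul_zero]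
  · rw [Units.val_mul, covDeriv_gaugeTransform, hE_V, mul_neg, mul_assoc, mul_assoc,
      Units.mul_inv_cancel_left]

end CommutingDerivations

section SmoothMatrixMaps

open scoped ContDiff

variable {X : Type*} [NormedAddCommGroup X] [NormedSpace ℝ X]
variable {m : Type*} [Fintype m] {𝕂 : Type*} [RCLike 𝕂] {r : ℕ∞ω}

lemma contDiff_matrix_mul {f g : X → Matrix m m 𝕂} (hf : ContDiff ℝ r f) (hg : ContDiff ℝ r g) :
    ContDiff ℝ r fun p => f p * g p :=
  (LinearMap.mul ℝ (Matrix m m 𝕂)).toContinuousBilinearMap.isBoundedBilinearMap.contDiff.comp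
    (hf.prodMk hg)

lemma fderiv_matrix_mul {f g : X → Matrix m m 𝕂} {p : X} (hf : DifferentiableAt ℝ f p)
    (hg : DifferentiableAt ℝ g p) (v : X) :
    fderiv ℝ (fun q => f q * g q) p v = fderiv ℝ f p v * g p + f p * fderiv ℝ g p v := by
  have h := (LinearMap.mul ℝ (Matrix m m 𝕂)).toContinuousBilinearMap.hasFDerivAt_of_bilinear
    hf.hasFDerivAt hg.hasFDerivAt
  exact (congrArg (· v) h.fderiv).trans (add_comm _ _)

variable [DecidableEq m]

lemma contDiff_matrix_det {f : X → Matrix m m 𝕂} (hf : ContDiff ℝ r f) :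
    ContDiff ℝ r fun p => (f p).det := by
  simp only [Matrix.det_apply]
  exact ContDiff.sum fun σ _ => (contDiff_prod fun i _ =>
    contDiff_pi.mp (contDiff_pi.mp hf (σ i)) i).const_smul _

lemma contDiff_matrix_updateRow {f : X → Matrix m m 𝕂} (hf : ContDiff ℝ r f) (i : m)
    (b : m → 𝕂) : ContDiff ℝ r fun p => (f p).updateRow i b := by
  refine contDiff_pi.mpr fun j => ?_
  obtain rfl | hj := eq_or_ne j i
  · simpa only [Matrix.updateRow_self] using contDiff_const
  · simpa only [Matrix.updateRow_ne hj] using contDiff_pi.mp hf j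

lemma contDiff_matrix_inv {f : X → Matrix m m 𝕂} (hf : ContDiff ℝ r f)
    (hu : ∀ p, IsUnit (f p)) : ContDiff ℝ r fun p => (f p)⁻¹ := by
  have det_ne_zero (p : X) : (f p).det ≠ 0 := ((Matrix.isUnit_iff_isUnit_det _).mp (hu p)).ne_zero
  have adjugate : ContDiff ℝ r fun p => (f p).adjugate := by
    refine contDiff_pi.mpr fun i => contDiff_pi.mpr fun j => ?_
    simpa only [Matrix.adjugate_apply] using contDiff_matrix_det (contDiff_matrix_updateRow hf j _)
  simp only [Matrix.inv_def, Ring.inverse_eq_inv']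
  exact ((contDiff_matrix_det hf).inv det_ne_zero).smul adjugate

variable (X m 𝕂) in
/-- The `ℝ`-algebra of smooth maps from `X` to square matrices. -/
def smoothMatrixMaps : Subalgebra ℝ (X → Matrix m m 𝕂) where
  carrier := {f | ContDiff ℝ ∞ f}
  mul_mem' := by
    simp only [Set.mem_ofPred]
    exact contDiff_matrix_mul
  add_mem' := by
    simp only [Set.mem_ofPred]
    exact ContDiff.add
  algebraMap_mem' _ := Set.mem_ofPred.mpr contDiff_const

namespace smoothMatrixMaps

instance : CoeFun (smoothMatrixMaps X m 𝕂) fun _ => X → Matrix m m 𝕂 := ⟨Subtype.val⟩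

lemma contDiff_coe (f : smoothMatrixMaps X m 𝕂) : ContDiff ℝ ∞ f := f.2

lemma differentiableAt_coe (f : smoothMatrixMaps X m 𝕂) (p : X) :
    DifferentiableAt ℝ f p :=
  (contDiff_coe f).differentiable (by simp) p

protected lemma ext {f g : smoothMatrixMaps X m 𝕂} (h : ∀ p, f p = g p) : f = g :=
  Subtype.ext (funext h)

lemma isUnit_of_forall_isUnit {f : smoothMatrixMaps X m 𝕂} (hf : ∀ p, IsUnit (f p)) :
    IsUnit f := by
  let finv : smoothMatrixMaps X m 𝕂 := ⟨fun p => (f p)⁻¹, contDiff_matrix_inv (contDiff_coe f) hf⟩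
  have hdet (p : X) : IsUnit (f p).det := (Matrix.isUnit_iff_isUnit_det _).mp (hf p)
  exact ⟨⟨f, finv, smoothMatrixMaps.ext fun p => Matrix.mul_nonsing_inv _ (hdet p),
    smoothMatrixMaps.ext fun p => Matrix.nonsing_inv_mul _ (hdet p)⟩, rfl⟩

lemma coe_units_inv_apply (u : (smoothMatrixMaps X m 𝕂)ˣ) (p : X) :
    (↑u⁻¹ : smoothMatrixMaps X m 𝕂) p = ((u : smoothMatrixMaps X m 𝕂) p)⁻¹ :=
  (Matrix.inv_eq_right_inv (congrArg (fun f : smoothMatrixMaps X m 𝕂 => f p) u.mul_inv)).symm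

/-- The derivative of a smooth matrix-valued map in a fixed direction. -/
def dirDeriv (v : X) (f : smoothMatrixMaps X m 𝕂) : smoothMatrixMaps X m 𝕂 :=
  ⟨fun p => fderiv ℝ f p v,
    ((contDiff_coe f).fderiv_right (m := ∞) (by simp)).clm_apply contDiff_const⟩

lemma dirDeriv_comm (v w : X) (f : smoothMatrixMaps X m 𝕂) :
    dirDeriv v (dirDeriv w f) = dirDeriv w (dirDeriv v f) := by
  have second (p v w : X) : dirDeriv v (dirDeriv w f) p = fderiv ℝ (fderiv ℝ f) p v w := by
    have hd : DifferentiableAt ℝ (fderiv ℝ f) p :=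
      ((contDiff_coe f).fderiv_right (m := ∞) (by simp)).differentiable (by simp) p
    exact congrArg (· v) ((ContinuousLinearMap.apply ℝ (Matrix m m 𝕂) w).hasFDerivAt.comp p
      hd.hasFDerivAt).fderiv
  have two_le : (2 : ℕ∞ω) ≤ ∞ := WithTop.coe_le_coe.mpr le_top
  refine smoothMatrixMaps.ext fun p => ?_
  rw [second, second]
  exact ((contDiff_coe f).contDiffAt.isSymmSndFDerivAt (by simpa using two_le)) v w

variable (X m 𝕂) in
/-- Directional differentiation of smooth matrix-valued maps. -/
def derivations : CommutingDerivations ℝ X (smoothMatrixMaps X m 𝕂) where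
  der := LinearMap.mk₂ ℝ dirDeriv
    (fun _ _ _ => smoothMatrixMaps.ext fun _ => map_add _ _ _)
    (fun _ _ _ => smoothMatrixMaps.ext fun _ => map_smul _ _ _)
    (fun v f g => smoothMatrixMaps.ext fun p => congrArg (· v) <|
      fderiv_add (differentiableAt_coe f p) (differentiableAt_coe g p))
    (fun c v f => smoothMatrixMaps.ext fun p => congrArg (· v) <|
      fderiv_const_smul (differentiableAt_coe f p) c)
  der_mul v f g := smoothMatrixMaps.ext fun p =>
    fderiv_matrix_mul (differentiableAt_coe f p) (differentiableAt_coe g p) v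
  der_comm := dirDeriv_comm

end smoothMatrixMaps

end SmoothMatrixMaps

section PartialDerivatives

variable {W : Type*} [NormedAddCommGroup W] [NormedSpace ℝ W] {f : P3 → W} {p : P3}

lemma pdx_eq_fderiv (hf : DifferentiableAt ℝ f p) : pdx f p = fderiv ℝ f p (1, 0, 0) := by
  have line : HasDerivAt (fun s : ℝ => ((s, p.2.1, p.2.2) : P3)) (1, 0, 0) p.1 :=
    (hasDerivAt_id _).prodMk ((hasDerivAt_const _ _).prodMk (hasDerivAt_const _ _))
  exact (hf.hasFDerivAt.comp_hasDerivAt p.1 line).deriv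

lemma pdy_eq_fderiv (hf : DifferentiableAt ℝ f p) : pdy f p = fderiv ℝ f p (0, 1, 0) := by
  have line : HasDerivAt (fun s : ℝ => ((p.1, s, p.2.2) : P3)) (0, 1, 0) p.2.1 :=
    (hasDerivAt_const _ _).prodMk ((hasDerivAt_id _).prodMk (hasDerivAt_const _ _))
  exact (hf.hasFDerivAt.comp_hasDerivAt p.2.1 line).deriv

lemma pdt_eq_fderiv (hf : DifferentiableAt ℝ f p) : pdt f p = fderiv ℝ f p (0, 0, 1) := by
  have line : HasDerivAt (fun s : ℝ => ((p.1, p.2.1, s) : P3)) (0, 0, 1) p.2.2 :=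
    (hasDerivAt_const _ _).prodMk ((hasDerivAt_const _ _).prodMk (hasDerivAt_id _))
  exact (hf.hasFDerivAt.comp_hasDerivAt p.2.2 line).deriv

end PartialDerivatives

/-- The algebra of smooth `n × n` matrix fields on space-time. -/
abbrev MatField (n : ℕ) := smoothMatrixMaps P3 (Fin n) ℂ

/-- The directional derivatives on `MatField n`. -/
abbrev spacetimeDerivations (n : ℕ) : CommutingDerivations ℝ P3 (MatField n) :=
  smoothMatrixMaps.derivations P3 (Fin n) ℂ

/-- The unit vector along the `x`-axis. -/
def xDir : P3 := (1, 0, 0)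

/-- The unit vector along the `y`-axis. -/
def yDir : P3 := (0, 1, 0)

/-- The unit vector along the `t`-axis. -/
def tDir : P3 := (0, 0, 1)

/-- The horizontal unit vector at angle `θ`, the direction singled out by the Ward equation with
parameter `e^{iθ}`. -/
def wardDir (θ : ℝ) : P3 := Real.cos θ • xDir + Real.sin θ • yDir

/-- The horizontal unit vector orthogonal to `wardDir θ` on its clockwise side. -/
def wardNormal (θ : ℝ) : P3 := Real.sin θ • xDir - Real.cos θ • yDir

lemma wardDir_add_pi (θ : ℝ) : wardDir (θ + Real.pi) = -wardDir θ := by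
  simp only [wardDir, Real.cos_add_pi, Real.sin_add_pi]
  module

lemma wardNormal_add_pi (θ : ℝ) : wardNormal (θ + Real.pi) = -wardNormal θ := by
  simp only [wardNormal, Real.cos_add_pi, Real.sin_add_pi]
  module

/-- The connection on `ℝ³` with components `Ax`, `Ay`, `At`, as a linear function of the
direction. -/
def connection {n : ℕ} (Ax Ay At : MatField n) : P3 →ₗ[ℝ] MatField n :=
  (LinearMap.fst ℝ ℝ (ℝ × ℝ)).smulRight Ax +
    ((LinearMap.fst ℝ ℝ ℝ ∘ₗ LinearMap.snd ℝ ℝ (ℝ × ℝ)).smulRight Ay +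
      (LinearMap.snd ℝ ℝ ℝ ∘ₗ LinearMap.snd ℝ ℝ (ℝ × ℝ)).smulRight At)

section MatField

open CommutingDerivations smoothMatrixMaps

variable {n : ℕ} (f Ax Ay At : MatField n) (g : (MatField n)ˣ) (p : P3)

lemma connection_xDir : connection Ax Ay At xDir = Ax := by
  simp [connection, xDir]

lemma connection_yDir : connection Ax Ay At yDir = Ay := by
  simp [connection, yDir]

lemma connection_tDir : connection Ax Ay At tDir = At := by
  simp [connection, tDir]

lemma pdx_eq_der : pdx f p = (spacetimeDerivations n).der xDir f p :=
  pdx_eq_fderiv (differentiableAt_coe f p)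

lemma pdy_eq_der : pdy f p = (spacetimeDerivations n).der yDir f p :=
  pdy_eq_fderiv (differentiableAt_coe f p)

lemma pdt_eq_der : pdt f p = (spacetimeDerivations n).der tDir f p :=
  pdt_eq_fderiv (differentiableAt_coe f p)

lemma covDeriv_xDir_apply :
    (spacetimeDerivations n).covDeriv (connection Ax Ay At) f xDir p =
      pdx f p - Ax p * f p := by
  rw [pdx_eq_der, covDeriv_apply, connection_xDir]
  rfl

lemma covDeriv_yDir_apply :
    (spacetimeDerivations n).covDeriv (connection Ax Ay At) f yDir p =
      pdy f p - Ay p * f p := by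
  rw [pdy_eq_der, covDeriv_apply, connection_yDir]
  rfl

lemma covDeriv_tDir_apply :
    (spacetimeDerivations n).covDeriv (connection Ax Ay At) f tDir p =
      pdt f p - At p * f p := by
  rw [pdt_eq_der, covDeriv_apply, connection_tDir]
  rfl

lemma pdx_mul_inv_eq_logDeriv :
    (fun q => pdx (g : MatField n) q * ((g : MatField n) q)⁻¹) =
      (spacetimeDerivations n).logDeriv g xDir := by
  funext q
  rw [pdx_eq_der, ← coe_units_inv_apply]
  rfl

lemma pdy_mul_inv_eq_logDeriv :
    (fun q => pdy (g : MatField n) q * ((g : MatField n) q)⁻¹) =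
      (spacetimeDerivations n).logDeriv g yDir := by
  funext q
  rw [pdy_eq_der, ← coe_units_inv_apply]
  rfl

lemma pdt_mul_inv_eq_logDeriv :
    (fun q => pdt (g : MatField n) q * ((g : MatField n) q)⁻¹) =
      (spacetimeDerivations n).logDeriv g tDir := by
  funext q
  rw [pdt_eq_der, ← coe_units_inv_apply]
  rfl

end MatField

lemma trig_smul_of_exp_smul {W : Type*} [AddCommGroup W] [Module ℂ W] {θ : ℝ} {X Y T P : W}
    (h : T + Complex.exp (θ * I) • (X - I • Y) = I • P)
    (hbar : T + (Complex.exp (θ * I))⁻¹ • (X + I • Y) = -(I • P)) :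
    T + (Complex.cos θ • X + Complex.sin θ • Y) = 0 ∧
      Complex.sin θ • X - Complex.cos θ • Y = P := by
  have I_smul_I_smul (w : W) : I • I • w = -w := by
    rw [smul_smul, I_mul_I, neg_one_smul]
  rw [Complex.exp_mul_I] at h
  rw [← Complex.exp_neg, ← neg_mul, Complex.exp_mul_I, Complex.cos_neg, Complex.sin_neg] at hbar
  constructor
  · linear_combination (norm := module)
      (2⁻¹ : ℂ) • (h + hbar) + Complex.sin θ • I_smul_I_smul Y
  · linear_combination (norm := module) (-(2⁻¹ : ℂ) * I) • (h - hbar) +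
      I_smul_I_smul (Complex.sin θ • X - Complex.cos θ • Y - P)

section WardFrame

open CommutingDerivations

variable {n : ℕ} {Ax Ay At Ph f : MatField n} {θ : ℝ}

lemma covDeriv_of_solvesMu_exp (h : SolvesMu Ax Ay At Ph (Complex.exp (θ * I)) f) :
    (spacetimeDerivations n).covDeriv (connection Ax Ay At) f (tDir + wardDir θ) = 0 ∧
      (spacetimeDerivations n).covDeriv (connection Ax Ay At) f (wardNormal θ) = Ph * f := by
  set nabla := (spacetimeDerivations n).covDeriv (connection Ax Ay At) f
  have eq_mu (p : P3) : nabla tDir p + Complex.exp (θ * I) • (nabla xDir p - I • nabla yDir p) =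
      I • (Ph p * f p) := by
    have h_mu := (h p).1
    simp only [pdz, add_mul, sub_mul, smul_mul_assoc] at h_mu
    rw [covDeriv_xDir_apply, covDeriv_yDir_apply, covDeriv_tDir_apply]
    linear_combination (norm := module) (2 : ℂ) • h_mu
  have eq_mu_inv (p : P3) :
      nabla tDir p + (Complex.exp (θ * I))⁻¹ • (nabla xDir p + I • nabla yDir p) =
        -(I • (Ph p * f p)) := by
    have h_mu_inv := (h p).2
    simp only [pdzbar, add_mul, sub_mul, smul_mul_assoc] at h_mu_inv
    rw [covDeriv_xDir_apply, covDeriv_yDir_apply, covDeriv_tDir_apply]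
    linear_combination (norm := module) (2 : ℂ) • h_mu_inv
  have real_form (p : P3) := trig_smul_of_exp_smul (eq_mu p) (eq_mu_inv p)
  simp only [← Complex.ofReal_cos, ← Complex.ofReal_sin, Complex.coe_smul] at real_form
  constructor <;> refine smoothMatrixMaps.ext fun p => ?_
  · rw [wardDir, map_add, map_add, map_smul, map_smul]
    exact (real_form p).1
  · rw [wardNormal, map_sub, map_smul, map_smul]
    exact (real_form p).2

lemma covDeriv_of_solvesMu_neg_exp (h : SolvesMu Ax Ay At Ph (-Complex.exp (θ * I)) f) :
    (spacetimeDerivations n).covDeriv (connection Ax Ay At) f (tDir - wardDir θ) = 0 ∧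
      (spacetimeDerivations n).covDeriv (connection Ax Ay At) f (wardNormal θ) = -(Ph * f) := by
  have exp_add_pi : Complex.exp ((θ + Real.pi : ℝ) * I) = -Complex.exp (θ * I) := by
    rw [Complex.ofReal_add, add_mul, Complex.exp_add, Complex.exp_pi_mul_I, mul_neg_one]
  obtain ⟨h_dir, h_normal⟩ := covDeriv_of_solvesMu_exp (exp_add_pi ▸ h)
  rw [wardDir_add_pi, ← sub_eq_add_neg] at h_dir
  rw [wardNormal_add_pi, map_neg] at h_normal
  exact ⟨h_dir, neg_eq_iff_eq_neg.mp h_normal⟩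

lemma curvature_wardDir_tDir_eq_adCovDeriv (θ : ℝ)
    (hxt : ∀ p, -(pdx At p) + pdt Ax p + brk (Ax p) (At p) = -(pdy Ph p - brk (Ay p) (Ph p)))
    (hyt : ∀ p, -(pdy At p) + pdt Ay p + brk (Ay p) (At p) = pdx Ph p - brk (Ax p) (Ph p)) :
    (spacetimeDerivations n).curvature (connection Ax Ay At) (wardDir θ) tDir =
      (spacetimeDerivations n).adCovDeriv (connection Ax Ay At) (wardNormal θ) Ph := by
  set D := spacetimeDerivations n
  have curvature_xt : -D.der xDir At + D.der tDir Ax + (Ax * At - At * Ax) =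
      -(D.der yDir Ph - (Ay * Ph - Ph * Ay)) := by
    refine smoothMatrixMaps.ext fun p => ?_
    have h := hxt p
    rw [pdx_eq_der, pdt_eq_der, pdy_eq_der] at h
    exact h
  have curvature_yt : -D.der yDir At + D.der tDir Ay + (Ay * At - At * Ay) =
      D.der xDir Ph - (Ax * Ph - Ph * Ax) := by
    refine smoothMatrixMaps.ext fun p => ?_
    have h := hyt p
    rw [pdy_eq_der, pdt_eq_der, pdx_eq_der] at h
    exact h
  simp only [curvature, adCovDeriv, wardDir, wardNormal, Ring.lie_def, map_add, map_sub, map_smul,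
    LinearMap.add_apply, LinearMap.sub_apply, LinearMap.smul_apply, connection_xDir,
    connection_yDir, connection_tDir, add_mul, mul_add, sub_mul, mul_sub, smul_mul_assoc,
    mul_smul_comm]
  linear_combination (norm := module)
    Real.cos θ • curvature_xt + Real.sin θ • curvature_yt

lemma wardOpAt_eq_wardOp (θ : ℝ) (g : (MatField n)ˣ) (p : P3) :
    WardOpAt θ (g : MatField n) p =
      (spacetimeDerivations n).wardOp g tDir (wardDir θ) (wardNormal θ) p := by
  set D := spacetimeDerivations n
  have rotation := apply_self_add_apply_self_rotate (D.der.compl₂ (D.logDeriv g))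
    (Real.cos_sq_add_sin_sq θ) xDir yDir
  simp only [LinearMap.compl₂_apply] at rotation
  rw [wardOp, add_assoc (-_), wardDir, wardNormal, rotation, map_add (D.logDeriv g), map_smul,
    map_smul]
  rw [WardOpAt, pdx_mul_inv_eq_logDeriv, pdy_mul_inv_eq_logDeriv, pdt_mul_inv_eq_logDeriv,
    congrFun (pdx_mul_inv_eq_logDeriv g) p, congrFun (pdy_mul_inv_eq_logDeriv g) p,
    congrFun (pdt_mul_inv_eq_logDeriv g) p, pdx_eq_der, pdy_eq_der, pdt_eq_der, add_assoc (-_),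
    brk]
  rfl

end WardFrame

theorem ward_equation_from_monopole_general {n : ℕ} (θ : ℝ) (Ax Ay At Ph : P3 → Mat n)
    (hxs : ContDiff ℝ (⊤ : ℕ∞) Ax) (hys : ContDiff ℝ (⊤ : ℕ∞) Ay)
    (hts : ContDiff ℝ (⊤ : ℕ∞) At) (hps : ContDiff ℝ (⊤ : ℕ∞) Ph)
    (hxt : ∀ p, -(pdx At p) + pdt Ax p + brk (Ax p) (At p) = -(pdy Ph p - brk (Ay p) (Ph p)))
    (hyt : ∀ p, -(pdy At p) + pdt Ay p + brk (Ay p) (At p) = pdx Ph p - brk (Ax p) (Ph p))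
    (k : P3 → Mat n) (hks : ContDiff ℝ (⊤ : ℕ∞) k) (hkgl : ∀ p, IsUnit (k p))
    (hk : SolvesMu Ax Ay At Ph (Complex.exp (θ * Complex.I)) k)
    (E : P3 → Mat n) (hEs : ContDiff ℝ (⊤ : ℕ∞) E) (hEgl : ∀ p, IsUnit (E p))
    (hE : SolvesMu Ax Ay At Ph (-Complex.exp (θ * Complex.I)) E) (p : P3) :
    WardOpAt θ (fun q => (k q)⁻¹ * E q) p = 0 := by
  lift Ax to MatField n using hxs
  lift Ay to MatField n using hys
  lift At to MatField n using hts
  lift Ph to MatField n using hps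
  lift k to MatField n using hks
  lift E to MatField n using hEs
  lift k to (MatField n)ˣ using smoothMatrixMaps.isUnit_of_forall_isUnit hkgl
  lift E to (MatField n)ˣ using smoothMatrixMaps.isUnit_of_forall_isUnit hEgl
  obtain ⟨hk_dir, hk_normal⟩ := covDeriv_of_solvesMu_exp hk
  obtain ⟨hE_dir, hE_normal⟩ := covDeriv_of_solvesMu_neg_exp hE
  have ward := (spacetimeDerivations n).wardOp_inv_mul_eq_zero
    (curvature_wardDir_tDir_eq_adCovDeriv θ hxt hyt) hk_dir hk_normal hE_dir hE_normal
  simp only [← smoothMatrixMaps.coe_units_inv_apply]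
  exact (wardOpAt_eq_wardOp θ (k⁻¹ * E) p).trans
    (congrArg (fun f : MatField n => f p) ward)

/-- If `(A,φ)` solves the space-time monopole equation, `k` is a smooth
unitary solution of the `μ`-linear system at `μ = e^{iθ}` and `E` is a smooth `GL(n,ℂ)`-valued
solution at `μ = −e^{iθ}`, then `g = k⁻¹E` solves the Ward equation with parameter `e^{iθ}`. -/
theorem ward_equation_from_monopole {n : ℕ} (θ : ℝ) (Ax Ay At Ph : P3 → Mat n)
    (hxs : ContDiff ℝ (⊤ : ℕ∞) Ax) (hys : ContDiff ℝ (⊤ : ℕ∞) Ay)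
    (hts : ContDiff ℝ (⊤ : ℕ∞) At) (hps : ContDiff ℝ (⊤ : ℕ∞) Ph)
    (hxa : SkewHerm Ax) (hya : SkewHerm Ay) (hta : SkewHerm At) (hpa : SkewHerm Ph)
    (hmono : MonopoleEq Ax Ay At Ph)
    (k : P3 → Mat n) (hks : ContDiff ℝ (⊤ : ℕ∞) k)
    (hku : ∀ p : P3, k p ∈ Matrix.unitaryGroup (Fin n) ℂ)
    (hk : SolvesMu Ax Ay At Ph (Complex.exp (θ * Complex.I)) k)
    (E : P3 → Mat n) (hEs : ContDiff ℝ (⊤ : ℕ∞) E) (hEgl : ∀ p : P3, IsUnit (E p))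
    (hE : SolvesMu Ax Ay At Ph (-Complex.exp (θ * Complex.I)) E) :
    ∀ p : P3, WardOpAt θ (fun q => (k q)⁻¹ * E q) p = 0 := by
  exact ward_equation_from_monopole_general θ Ax Ay At Ph hxs hys hts hps
    (fun p => (hmono p).2.1) (fun p => (hmono p).2.2) k hks
    (fun p => (Unitary.toUnits ⟨k p, hku p⟩).isUnit) hk E hEs hEgl hE
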